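/- There exist positive constants B₀, B₁, B₂ and ε > 0, depending only on k, ℓ and L₀, with the following property: if y is a quasi shell solution satisfying 2m(r)/r ≤ 8/9 for all r > 0 whose inner radius satisfies 0 < R₀ ≤ ε, then ϱ(r) > 0 for all r with R₀ < r ≤ R₀(1 + B₀R₀^{2/(q+1)}), and there exists a radius r₁ with R₀(1 + B₀R₀^{2/(q+1)}) < r₁ ≤ R₀(1 + B₂R₀^{1/(q+1)})/(1 − B₁R₀^{2/(q+1)}) such that γ(r₁) ≤ 0, hence ϱ(r₁) = p(r₁) = 0. -/

import Mathlib

open MeasureTheory Real Set Filter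

/-- The constant `c_ℓ = 2π ∫₀¹ s^ℓ (1-s)^{-1/2} ds`. -/
noncomputable def cConst (ℓ : ℝ) : ℝ :=
  2 * π * ∫ s in Set.Ioc (0 : ℝ) 1, s ^ ℓ / Real.sqrt (1 - s)

/-- Energy density of the massless Einstein--Vlasov ansatz. -/
noncomputable def rho (k ℓ L0 : ℝ) (y : ℝ → ℝ) (r : ℝ) : ℝ :=
  cConst ℓ * r ^ (2 * ℓ) *
    ∫ ε in Set.Ioc (Real.sqrt L0 / r) (Real.exp (y r)),
      (1 - ε * Real.exp (-(y r))) ^ k * ε ^ 2 * (ε ^ 2 - L0 / r ^ 2) ^ (ℓ + 1 / 2)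

/-- Radial pressure of the massless Einstein--Vlasov ansatz. -/
noncomputable def pres (k ℓ L0 : ℝ) (y : ℝ → ℝ) (r : ℝ) : ℝ :=
  (cConst ℓ / (2 * ℓ + 3)) * r ^ (2 * ℓ) *
    ∫ ε in Set.Ioc (Real.sqrt L0 / r) (Real.exp (y r)),
      (1 - ε * Real.exp (-(y r))) ^ k * (ε ^ 2 - L0 / r ^ 2) ^ (ℓ + 3 / 2)

/-- The Hawking mass `m(r) = 4π ∫₀ʳ s² ϱ(s) ds`. -/
noncomputable def hawkingMass (k ℓ L0 : ℝ) (y : ℝ → ℝ) (r : ℝ) : ℝ :=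
  4 * π * ∫ s in Set.Ioc (0 : ℝ) r, s ^ 2 * rho k ℓ L0 y s

/-- The characteristic function `γ(r) = y(r) - (1/2) ln (L₀ / r²)`. -/
noncomputable def charFn (L0 : ℝ) (y : ℝ → ℝ) (r : ℝ) : ℝ :=
  y r - (1 / 2) * Real.log (L0 / r ^ 2)

/-- The inner radius `R₀ = √L₀ e^{-y(0)}`. -/
noncomputable def innerRadius (L0 : ℝ) (y : ℝ → ℝ) : ℝ :=
  Real.sqrt L0 * Real.exp (-(y 0))

/-- A quasi shell solution of the massless Einstein--Vlasov system. -/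
def QuasiShell (k ℓ L0 : ℝ) (y : ℝ → ℝ) : Prop :=
  ContDiffOn ℝ 1 y (Set.Ici 0) ∧
  ∀ r > 0, 2 * hawkingMass k ℓ L0 y r / r < 1 ∧
    HasDerivAt y
      (-(1 - 2 * hawkingMass k ℓ L0 y r / r)⁻¹ *
        (4 * π * r * pres k ℓ L0 y r + hawkingMass k ℓ L0 y r / r ^ 2)) r

/-!
Near the inner radius write `r = R₀ (1 + t δ)` with `δ = R₀ ^ (2 / (q + 1))`, so that
`δ ^ (q + 1) = R₀ ^ 2`. The matter quantities satisfy `r ^ 4 ϱ ~ γ₊ ^ q` and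
`r ^ 4 p = O(γ₊ ^ (q + 1))` with constants depending only on `k`, `ℓ` and `L₀`, so with this choice
of `δ` the equations for `G = γ / δ` and `M = m / R₀` as functions of `t` are controlled uniformly
in `R₀`. As `t` increases, `G` first grows linearly. While `G` stays bounded below, `M` accumulates
at a definite rate, so it must exceed a third of the radius, since `M < 1`. From then on the slope
of `G` is negative and bounded away from `0`, and `G` vanishes before a time `T` independent of
`R₀`, that is, within the distance `T R₀ δ` of the inner radius.
-/

/-! ### Zeros of the rescaled shell equations -/

section MeanValue

variable {f f' : ℝ → ℝ} {a b C : ℝ}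

lemma mul_sub_le_image_sub_of_hasDerivAt (hab : a ≤ b)
    (hf : ∀ t ∈ Icc a b, HasDerivAt f (f' t) t) (hC : ∀ t ∈ Icc a b, C ≤ f' t) :
    C * (b - a) ≤ f b - f a :=
  (convex_Icc a b).mul_sub_le_image_sub_of_le_deriv
    (fun t ht ↦ (hf t ht).continuousAt.continuousWithinAt)
    (fun t ht ↦ (hf t (interior_subset ht)).differentiableAt.differentiableWithinAt)
    (fun t ht ↦ (hf t (interior_subset ht)).deriv.symm ▸ hC t (interior_subset ht))
    a (left_mem_Icc.2 hab) b (right_mem_Icc.2 hab) hab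

lemma image_sub_le_mul_sub_of_hasDerivAt (hab : a ≤ b)
    (hf : ∀ t ∈ Icc a b, HasDerivAt f (f' t) t) (hC : ∀ t ∈ Icc a b, f' t ≤ C) :
    f b - f a ≤ C * (b - a) := by
  have := mul_sub_le_image_sub_of_hasDerivAt hab (fun t ht ↦ (hf t ht).neg)
    (fun t ht ↦ neg_le_neg (hC t ht))
  simp only [Pi.neg_apply] at this
  linarith

end MeanValue

/-- The slope of the rescaled characteristic function `G` at `s = r / R₀`, where `M = m / R₀` is the
rescaled mass and `Q = 4 π R₀ r p` the rescaled pressure. -/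
noncomputable def rescaledSlope (s M Q : ℝ) : ℝ :=
  1 / s - (1 - 2 * M / s)⁻¹ * (Q + M / s ^ 2)

section RescaledSlope

variable {s M Q ζ : ℝ}

lemma rescaledSlope_eq (hs : 0 < s) (hM : 2 * M < s) :
    rescaledSlope s M Q = ((s - 3 * M) / s - s * Q) / (s - 2 * M) := by
  have : s - 2 * M ≠ 0 := by linarith
  have hinv : 1 - 2 * M / s = (s - 2 * M) / s := by field_simp
  rw [rescaledSlope, hinv]
  field_simp
  ring

lemma one_div_four_le_rescaledSlope (hs : 1 ≤ s) (hs' : s ≤ 2) (hM : 0 ≤ M) (hQ : 0 ≤ Q)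
    (hMQ : M + Q ≤ 1 / 8) : 1 / 4 ≤ rescaledSlope s M Q := by
  rw [rescaledSlope_eq (by linarith) (by linarith), le_div_iff₀ (by linarith),
    div_sub' (by linarith), le_div_iff₀ (by linarith)]
  have hss : s * s ≤ 2 * s := by nlinarith
  have hssQ : s * (s * Q) ≤ 4 * Q := by nlinarith [mul_le_mul_of_nonneg_right hss hQ]
  have hMs : 0 ≤ M * s := mul_nonneg hM (by linarith)
  linarith

lemma neg_le_rescaledSlope (hs : 1 ≤ s) (hζ : 0 ≤ ζ) (hζ' : ζ ≤ 1 / 24)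
    (hM : M ≤ (1 / 3 + ζ) * s) (hQ : 0 ≤ Q) : -(12 * ζ) - 4 * Q ≤ rescaledSlope s M Q := by
  have hs₀ : 0 < s := by linarith
  have hgap : s / 4 ≤ s - 2 * M := by nlinarith
  have hnum : -(3 * ζ) ≤ (s - 3 * M) / s := by rw [le_div_iff₀ hs₀]; linarith
  rw [rescaledSlope_eq hs₀ (by linarith), le_div_iff₀ (by linarith)]
  calc (-(12 * ζ) - 4 * Q) * (s - 2 * M) ≤ (-(12 * ζ) - 4 * Q) * (s / 4) :=
        mul_le_mul_of_nonpos_left hgap (by linarith)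
    _ ≤ -(3 * ζ) - s * Q := by nlinarith
    _ ≤ (s - 3 * M) / s - s * Q := by linarith

lemma rescaledSlope_le_neg (hs : 0 < s) (hs' : s ≤ 2) (hζ : 0 ≤ ζ)
    (hM : (1 / 3 + ζ) * s ≤ M) (hM' : 2 * M < s) (hQ : 0 ≤ Q) :
    rescaledSlope s M Q ≤ -(3 * ζ) := by
  have hnum : (s - 3 * M) / s ≤ -(3 * ζ) := by rw [div_le_iff₀ hs]; linarith
  have hgap : s - 2 * M ≤ 1 := by nlinarith
  rw [rescaledSlope_eq hs hM', div_le_iff₀ (by linarith)]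
  calc (s - 3 * M) / s - s * Q ≤ -(3 * ζ) := by nlinarith
    _ ≤ -(3 * ζ) * (s - 2 * M) := by nlinarith

end RescaledSlope

/-- The shell equations near the inner radius, in the variable `t` with `r = R₀ (1 + t δ)`, where
`G = γ / δ`, `M = m / R₀` with derivative `M'`, and `Q = 4 π R₀ r p`. The last three fields say that
`M'` and `Q` are comparable to, respectively bounded by, the powers `q` and `q + 1` of the positive
part of `G`, with constants that do not depend on the solution. -/
structure RescaledShell (q a₁ a₂ b δ T : ℝ) (G M M' Q : ℝ → ℝ) : Prop where
  δ_nonneg : 0 ≤ δ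
  mul_le_one : T * δ ≤ 1
  G_zero : G 0 = 0
  M_zero : M 0 = 0
  hasDerivAt_G : ∀ t ∈ Icc 0 T, HasDerivAt G (rescaledSlope (1 + t * δ) (M t) (Q t)) t
  hasDerivAt_M : ∀ t ∈ Icc 0 T, HasDerivAt M (M' t) t
  G_le_self : ∀ t ∈ Icc 0 T, G t ≤ t
  two_mul_M_lt : ∀ t ∈ Icc 0 T, 2 * M t < 1 + t * δ
  Q_nonneg : ∀ t ∈ Icc 0 T, 0 ≤ Q t
  le_M' : ∀ t ∈ Icc 0 T, a₁ * max (G t) 0 ^ q ≤ M' t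
  M'_le : ∀ t ∈ Icc 0 T, M' t ≤ a₂ * max (G t) 0 ^ q
  Q_le : ∀ t ∈ Icc 0 T, Q t ≤ b * max (G t) 0 ^ (q + 1)

namespace RescaledShell

variable {q a₁ a₂ b δ T : ℝ} {G M M' Q : ℝ → ℝ} {c t u v ζ : ℝ}

lemma one_le_radius (h : RescaledShell q a₁ a₂ b δ T G M M' Q) (ht : 0 ≤ t) : 1 ≤ 1 + t * δ :=
  le_add_of_nonneg_right (mul_nonneg ht h.δ_nonneg)

lemma radius_le_two (h : RescaledShell q a₁ a₂ b δ T G M M' Q) (ht : t ≤ T) : 1 + t * δ ≤ 2 := by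
  linarith [h.mul_le_one, mul_le_mul_of_nonneg_right ht h.δ_nonneg]

lemma max_G_le (h : RescaledShell q a₁ a₂ b δ T G M M' Q) (ht : t ∈ Icc 0 T) :
    max (G t) 0 ≤ t :=
  max_le (h.G_le_self t ht) ht.1

lemma monotoneOn_M (h : RescaledShell q a₁ a₂ b δ T G M M' Q) (ha₁ : 0 ≤ a₁) :
    MonotoneOn M (Icc 0 T) := by
  intro u hu v hv huv
  have hsub : Icc u v ⊆ Icc 0 T := Icc_subset_Icc hu.1 hv.2
  have := mul_sub_le_image_sub_of_hasDerivAt (C := 0) huv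
    (fun t ht ↦ h.hasDerivAt_M t (hsub ht))
    (fun t ht ↦ le_trans (by positivity) (h.le_M' t (hsub ht)))
  linarith

lemma M_nonneg (h : RescaledShell q a₁ a₂ b δ T G M M' Q) (ha₁ : 0 ≤ a₁) (ht : t ∈ Icc 0 T) :
    0 ≤ M t :=
  h.M_zero.symm.trans_le (h.monotoneOn_M ha₁ ⟨le_rfl, ht.1.trans ht.2⟩ ht ht.1)

lemma M_lt_one (h : RescaledShell q a₁ a₂ b δ T G M M' Q) (ht : t ∈ Icc 0 T) : M t < 1 := by
  linarith [h.two_mul_M_lt t ht, h.radius_le_two ht.2]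

lemma M_le_mul (h : RescaledShell q a₁ a₂ b δ T G M M' Q) (hq : 0 ≤ q) (ha₂ : 0 ≤ a₂)
    (ht : t ∈ Icc 0 T) (ht₁ : t ≤ 1) : M t ≤ a₂ * t := by
  have hsub : Icc 0 t ⊆ Icc 0 T := Icc_subset_Icc_right ht.2
  have := image_sub_le_mul_sub_of_hasDerivAt ht.1 (fun u hu ↦ h.hasDerivAt_M u (hsub hu))
    (fun u hu ↦ calc
      M' u ≤ a₂ * max (G u) 0 ^ q := h.M'_le u (hsub hu)
      _ ≤ a₂ * 1 := by
        gcongr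
        exact rpow_le_one (le_max_right _ _)
          ((h.max_G_le (hsub hu)).trans (hu.2.trans ht₁)) hq)
  rw [h.M_zero] at this
  linarith

lemma Q_le_mul (h : RescaledShell q a₁ a₂ b δ T G M M' Q) (hq : 0 ≤ q) (hb : 0 ≤ b)
    (ht : t ∈ Icc 0 T) (ht₁ : t ≤ 1) : Q t ≤ b * t :=
  calc Q t ≤ b * max (G t) 0 ^ (q + 1) := h.Q_le t ht
    _ ≤ b * max (G t) 0 ^ (1 : ℝ) := by
      gcongr b * ?_
      exact rpow_le_rpow_of_exponent_ge' (le_max_right _ _) ((h.max_G_le ht).trans ht₁)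
        zero_le_one (by linarith)
    _ ≤ b * t := by rw [rpow_one]; gcongr; exact h.max_G_le ht

lemma div_four_le_G (h : RescaledShell q a₁ a₂ b δ T G M M' Q) (hq : 0 ≤ q) (ha₁ : 0 ≤ a₁)
    (ha₂ : 0 ≤ a₂) (hb : 0 ≤ b) (ht : t ∈ Icc 0 T) (ht₁ : t ≤ 1)
    (htab : (a₂ + b) * t ≤ 1 / 8) : t / 4 ≤ G t := by
  have hsub : Icc 0 t ⊆ Icc 0 T := Icc_subset_Icc_right ht.2
  have := mul_sub_le_image_sub_of_hasDerivAt (C := 1 / 4) ht.1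
    (fun u hu ↦ h.hasDerivAt_G u (hsub hu)) (fun u hu ↦ by
      have hu' := hsub hu
      refine one_div_four_le_rescaledSlope (h.one_le_radius hu.1) (h.radius_le_two hu'.2)
        (h.M_nonneg ha₁ hu') (h.Q_nonneg u hu') ?_
      calc M u + Q u ≤ a₂ * u + b * u :=
            add_le_add (h.M_le_mul hq ha₂ hu' (hu.2.trans ht₁))
              (h.Q_le_mul hq hb hu' (hu.2.trans ht₁))
        _ = (a₂ + b) * u := by ring
        _ ≤ (a₂ + b) * t := by gcongr; exact hu.2
        _ ≤ 1 / 8 := htab)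
  rw [h.G_zero] at this
  linarith

lemma Q_le_M'_mul_G (h : RescaledShell q a₁ a₂ b δ T G M M' Q) (hq : 0 ≤ q) (ha₁ : 0 < a₁)
    (hb : 0 ≤ b) (ht : t ∈ Icc 0 T) (hG : 0 ≤ G t) : Q t ≤ b / a₁ * M' t * G t := by
  have hM' := h.le_M' t ht
  have hQ := h.Q_le t ht
  rw [max_eq_left hG] at hM' hQ
  calc Q t ≤ b * G t ^ (q + 1) := hQ
    _ = b / a₁ * (a₁ * G t ^ q) * G t := by
      rw [rpow_add_one' hG (by linarith)]
      field_simp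
    _ ≤ b / a₁ * M' t * G t := by gcongr

/-- As long as `M` does not exceed the fraction `1 / 3 + ζ` of the radius, the only sizeable
negative term in the slope of `G` is at least `-4 Q ≥ -(4 b / a₁) M' G`, which the integrating
factor `exp (4 b / a₁ * M)` absorbs; it is bounded because `M < 1`. -/
lemma G_le_mul_exp (h : RescaledShell q a₁ a₂ b δ T G M M' Q) (hq : 0 ≤ q) (ha₁ : 0 < a₁)
    (hb : 0 ≤ b) (hζ : 0 ≤ ζ) (hζ' : ζ ≤ 1 / 24) (hu : 0 ≤ u) (huv : u ≤ v) (hv : v ≤ T)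
    (hG : ∀ t ∈ Icc u v, 0 ≤ G t) (hM : ∀ t ∈ Icc u v, M t ≤ (1 / 3 + ζ) * (1 + t * δ)) :
    G u ≤ (G v + 12 * ζ * (v - u)) * exp (4 * (b / a₁)) := by
  set β := 4 * (b / a₁) with hβ
  have hβ₀ : 0 ≤ β := by positivity
  have hsub : Icc u v ⊆ Icc 0 T := Icc_subset_Icc hu hv
  have hexp_le : ∀ t ∈ Icc u v, exp (β * M t) ≤ exp β := fun t ht ↦
    exp_le_exp.2 (mul_le_of_le_one_right hβ₀ (h.M_lt_one (hsub ht)).le)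
  have hslope : ∀ t ∈ Icc u v,
      -(12 * ζ) ≤ rescaledSlope (1 + t * δ) (M t) (Q t) + β * M' t * G t := fun t ht ↦ by
    have h₁ := neg_le_rescaledSlope (h.one_le_radius (hu.trans ht.1)) hζ hζ' (hM t ht)
      (h.Q_nonneg t (hsub ht))
    have h₂ := h.Q_le_M'_mul_G hq ha₁ hb (hsub ht) (hG t ht)
    rw [hβ]
    linarith
  have hincr := mul_sub_le_image_sub_of_hasDerivAt (f := fun t ↦ G t * exp (β * M t))
    (C := -(12 * ζ) * exp β) huv
    (fun t ht ↦ (h.hasDerivAt_G t (hsub ht)).mul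
      ((h.hasDerivAt_M t (hsub ht)).const_mul β).exp)
    (fun t ht ↦ calc
      -(12 * ζ) * exp β ≤ -(12 * ζ) * exp (β * M t) :=
        mul_le_mul_of_nonpos_left (hexp_le t ht) (by linarith)
      _ ≤ (rescaledSlope (1 + t * δ) (M t) (Q t) + β * M' t * G t) * exp (β * M t) :=
        mul_le_mul_of_nonneg_right (hslope t ht) (exp_pos _).le
      _ = _ := by ring)
  have hleft : G u ≤ G u * exp (β * M u) := le_mul_of_one_le_right (hG u ⟨le_rfl, huv⟩)
    (one_le_exp (mul_nonneg hβ₀ (h.M_nonneg ha₁.le (hsub ⟨le_rfl, huv⟩))))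
  have hright : G v * exp (β * M v) ≤ G v * exp β :=
    mul_le_mul_of_nonneg_left (hexp_le v ⟨huv, le_rfl⟩) (hG v ⟨huv, le_rfl⟩)
  linarith

lemma mul_sub_le_M (h : RescaledShell q a₁ a₂ b δ T G M M' Q) (hq : 0 ≤ q) (ha₁ : 0 ≤ a₁)
    (hc : 0 ≤ c) (hu : 0 ≤ u) (huv : u ≤ v) (hv : v ≤ T) (hG : ∀ t ∈ Icc u v, c ≤ G t) :
    a₁ * c ^ q * (v - u) ≤ M v := by
  have hsub : Icc u v ⊆ Icc 0 T := Icc_subset_Icc hu hv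
  have := mul_sub_le_image_sub_of_hasDerivAt huv (fun t ht ↦ h.hasDerivAt_M t (hsub ht))
    (fun t ht ↦ calc
      a₁ * c ^ q ≤ a₁ * max (G t) 0 ^ q := by gcongr; exact (hG t ht).trans (le_max_left _ _)
      _ ≤ M' t := h.le_M' t (hsub ht))
  linarith [h.M_nonneg ha₁ (hsub ⟨le_rfl, huv⟩)]

/-- Otherwise `G` stays above `c`, and the mass gained at rate `a₁ * c ^ q` would reach `1`. -/
lemma exists_lt_M (h : RescaledShell q a₁ a₂ b δ T G M M' Q) (hq : 0 ≤ q) (ha₁ : 0 < a₁)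
    (hb : 0 ≤ b) (hζ : 0 ≤ ζ) (hζ' : ζ ≤ 1 / 24) (hc : 0 ≤ c) (hu : 0 ≤ u) (huv : u ≤ v)
    (hv : v ≤ T) (hGu : 2 * c * exp (4 * (b / a₁)) ≤ G u) (hζc : 12 * ζ * (v - u) ≤ c)
    (hcv : 1 ≤ a₁ * c ^ q * (v - u)) (hG : ∀ t ∈ Icc u v, 0 ≤ G t) :
    ∃ t ∈ Icc u v, (1 / 3 + ζ) * (1 + t * δ) < M t := by
  by_contra! hM
  refine (h.M_lt_one ⟨hu.trans huv, hv⟩).not_ge (hcv.trans ?_)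
  refine h.mul_sub_le_M hq ha₁.le hc hu huv hv fun t ht ↦ ?_
  have hsub : Icc u t ⊆ Icc u v := Icc_subset_Icc_right ht.2
  have hGt := h.G_le_mul_exp hq ha₁ hb hζ hζ' hu ht.1 (ht.2.trans hv)
    (fun x hx ↦ hG x (hsub hx)) (fun x hx ↦ hM x (hsub hx))
  have : 2 * c ≤ G t + 12 * ζ * (t - u) := le_of_mul_le_mul_right (hGu.trans hGt) (exp_pos _)
  have : 12 * ζ * (t - u) ≤ 12 * ζ * (v - u) := by gcongr; exact ht.2
  linarith

/-- Once `M` exceeds a third of the radius by a definite fraction, it keeps doing so because `M` is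
nondecreasing, and `G` decreases at a definite rate. -/
lemma G_le_sub_mul (h : RescaledShell q a₁ a₂ b δ T G M M' Q) (ha₁ : 0 ≤ a₁) (hζ : 0 ≤ ζ)
    (hζ' : ζ ≤ 1 / 3) (hδ : T * δ ≤ ζ) (hu : u ∈ Icc 0 T)
    (hM : (1 / 3 + ζ) * (1 + u * δ) ≤ M u) : G T ≤ u - 3 / 2 * ζ * (T - u) := by
  have hsub : Icc u T ⊆ Icc 0 T := Icc_subset_Icc_left hu.1
  have hMu : 1 / 3 + ζ ≤ M u :=
    (le_mul_of_one_le_right (by positivity) (h.one_le_radius hu.1)).trans hM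
  have := image_sub_le_mul_sub_of_hasDerivAt (C := -(3 * (ζ / 2))) hu.2
    (fun t ht ↦ h.hasDerivAt_G t (hsub ht)) (fun t ht ↦ by
      have ht' := hsub ht
      refine rescaledSlope_le_neg (by linarith [h.one_le_radius ht'.1]) (h.radius_le_two ht'.2)
        (by positivity) ?_ (h.two_mul_M_lt t ht') (h.Q_nonneg t ht')
      have htδ : t * δ ≤ ζ := (mul_le_mul_of_nonneg_right ht.2 h.δ_nonneg).trans hδ
      calc (1 / 3 + ζ / 2) * (1 + t * δ) ≤ (1 / 3 + ζ / 2) * (1 + ζ) := by gcongr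
        _ ≤ 1 / 3 + ζ := by nlinarith
        _ ≤ M t := hMu.trans (h.monotoneOn_M ha₁ hu ht' ht.1))
  linarith [h.G_le_self u hu]

lemma exists_G_nonpos (h : RescaledShell q a₁ a₂ b δ T G M M' Q) (hq : 0 ≤ q) (ha₁ : 0 < a₁)
    (hb : 0 ≤ b) (hζ : 0 ≤ ζ) (hζ' : ζ ≤ 1 / 24) (hc : 0 ≤ c) (hu : 0 ≤ u) (huv : u ≤ v)
    (hGu : 2 * c * exp (4 * (b / a₁)) ≤ G u) (hζc : 12 * ζ * (v - u) ≤ c)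
    (hcv : 1 ≤ a₁ * c ^ q * (v - u)) (hδ : T * δ ≤ ζ) (hvT : v ≤ T) (hT : v ≤ ζ * (T - v)) :
    ∃ t ∈ Icc u T, G t ≤ 0 := by
  by_contra! hG
  obtain ⟨w, hw, hMw⟩ := h.exists_lt_M hq ha₁ hb hζ hζ' hc hu huv hvT hGu hζc hcv
    fun t ht ↦ (hG t ⟨ht.1, ht.2.trans hvT⟩).le
  have hGT := h.G_le_sub_mul ha₁.le hζ (by linarith) hδ ⟨hu.trans hw.1, hw.2.trans hvT⟩ hMw.le
  have hwv : ζ * (T - v) ≤ ζ * (T - w) := by gcongr; exact hw.2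
  linarith [hG T ⟨huv.trans hvT, le_rfl⟩, hw.2]

/-- The three phases: `G` grows linearly up to `t₀`, stays above `c` for too long to keep `M` below
a third of the radius up to `v`, and then has negative slope long enough to vanish before `T`. -/
theorem exists_zero_of_small (hq : 0 ≤ q) (ha₁ : 0 < a₁) (ha₂ : 0 < a₂) (hb : 0 ≤ b) :
    ∃ t₀ T δ₀ : ℝ, 0 < t₀ ∧ t₀ < T ∧ 0 < δ₀ ∧ T * δ₀ ≤ 1 ∧
      ∀ δ ≤ δ₀, ∀ G M M' Q : ℝ → ℝ, RescaledShell q a₁ a₂ b δ T G M M' Q →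
        (∀ t ∈ Ioc 0 t₀, 0 < G t) ∧ ∃ t ∈ Ioc t₀ T, G t ≤ 0 := by
  obtain ⟨t₀, ht₀, ht₀₁, ht₀ab⟩ : ∃ t₀ > 0, t₀ ≤ 1 ∧ (a₂ + b) * t₀ ≤ 1 / 8 :=
    ⟨min 1 (1 / 8 / (a₂ + b)), by positivity, min_le_left _ _,
      (mul_le_mul_of_nonneg_left (min_le_right _ _) (by positivity)).trans_eq (by field_simp)⟩
  obtain ⟨c, hc, hct₀⟩ : ∃ c > 0, 2 * c * exp (4 * (b / a₁)) = t₀ / 4 :=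
    ⟨t₀ / (8 * exp (4 * (b / a₁))), by positivity, by field_simp; norm_num⟩
  obtain ⟨v, htv, hcv⟩ : ∃ v > t₀, a₁ * c ^ q * (v - t₀) = 1 :=
    ⟨t₀ + 1 / (a₁ * c ^ q), lt_add_of_pos_right _ (by positivity), by field_simp; ring⟩
  obtain ⟨ζ, hζ, hζ', hζc⟩ : ∃ ζ > 0, ζ ≤ 1 / 24 ∧ 12 * ζ * (v - t₀) ≤ c := by
    have hvt : 0 < 12 * (v - t₀) := by linarith
    refine ⟨min (1 / 24) (c / (12 * (v - t₀))), lt_min (by norm_num) (div_pos hc hvt),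
      min_le_left _ _, ?_⟩
    linarith [(le_div_iff₀ hvt).1 (min_le_right (1 / 24) (c / (12 * (v - t₀))))]
  obtain ⟨T, hvT, hT⟩ : ∃ T ≥ v, v = ζ * (T - v) :=
    ⟨v + v / ζ, le_add_of_nonneg_right (div_pos (ht₀.trans htv) hζ).le, by field_simp; ring⟩
  have hT₀ : 0 < T := ht₀.trans (htv.trans_le hvT)
  refine ⟨t₀, T, ζ / T, ht₀, htv.trans_le hvT, by positivity, by field_simp; linarith,
    fun δ hδ G M M' Q h ↦ ?_⟩
  have hG : ∀ t ∈ Icc 0 t₀, t / 4 ≤ G t := fun t ht ↦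
    h.div_four_le_G hq ha₁.le ha₂.le hb ⟨ht.1, ht.2.trans (htv.le.trans hvT)⟩ (ht.2.trans ht₀₁)
      ((mul_le_mul_of_nonneg_left ht.2 (by positivity)).trans ht₀ab)
  have hGt₀ := hG t₀ ⟨ht₀.le, le_rfl⟩
  obtain ⟨t, ht, hGt⟩ := h.exists_G_nonpos hq ha₁ hb hζ.le hζ' hc.le ht₀.le htv.le
    (hct₀.trans_le hGt₀) hζc hcv.ge ((le_div_iff₀' hT₀).1 hδ) hvT hT.le
  refine ⟨fun t ht ↦ (div_pos ht.1 four_pos).trans_le (hG t ⟨ht.1.le, ht.2⟩), t,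
    ⟨ht.1.lt_of_ne ?_, ht.2⟩, hGt⟩
  rintro rfl
  linarith

end RescaledShell

/-! ### Matter quantities -/

section cConst

variable {ℓ : ℝ}

lemma betaIntegral_eq_integral_div_sqrt (ℓ : ℝ) :
    Complex.betaIntegral ((ℓ + 1 : ℝ) : ℂ) ((1 / 2 : ℝ) : ℂ) =
      ((∫ s in (0 : ℝ)..1, s ^ ℓ / √(1 - s) : ℝ) : ℂ) := by
  rw [Complex.betaIntegral, ← intervalIntegral.integral_ofReal]
  refine intervalIntegral.integral_congr fun s hs ↦ ?_
  rw [uIcc_of_le zero_le_one] at hs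
  have hs₁ : 0 ≤ 1 - s := sub_nonneg.2 hs.2
  simp only [div_eq_mul_inv (s ^ ℓ), sqrt_eq_rpow, ← rpow_neg hs₁, Complex.ofReal_mul,
    Complex.ofReal_cpow hs.1, Complex.ofReal_cpow hs₁]
  push_cast
  norm_num

lemma cConst_eq_beta (hℓ : -1 < ℓ) :
    cConst ℓ = 2 * π * ProbabilityTheory.beta (ℓ + 1) (1 / 2) := by
  rw [ProbabilityTheory.beta_eq_betaIntegralReal _ _ (by linarith) (by norm_num),
    betaIntegral_eq_integral_div_sqrt, Complex.ofReal_re,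
    intervalIntegral.integral_of_le zero_le_one, cConst]

lemma cConst_pos (hℓ : -1 < ℓ) : 0 < cConst ℓ := by
  have := ProbabilityTheory.beta_pos (show 0 < ℓ + 1 by linarith) one_half_pos
  rw [cConst_eq_beta hℓ]
  positivity

end cConst

/-- The factor left in the matter integral
`∫ (1 - ε / b) ^ k * ε ^ n * (ε ^ 2 - a ^ 2) ^ α` over `a < ε < b` after its scale in `a` and its
vanishing order `k + α + 1` in `z = b / a - 1` have been split off. It is continuous and positive
up to `z = 0`. -/
noncomputable def matterFactor (k α : ℝ) (n : ℕ) (z : ℝ) : ℝ :=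
  ((1 + z) ^ k)⁻¹ * ∫ v in (0 : ℝ)..1, (1 - v) ^ k * v ^ α * (1 + z * v) ^ n * (2 + z * v) ^ α

section MatterFactor

variable {k α a b z : ℝ}

lemma continuous_matterFactor_integrand (hk : 0 ≤ k) (hα : 0 ≤ α) (n : ℕ) :
    Continuous fun w : ℝ × ℝ ↦
      (1 - w.2) ^ k * w.2 ^ α * (1 + w.1 * w.2) ^ n * (2 + w.1 * w.2) ^ α := by
  fun_prop (disch := simp [hk, hα])

lemma continuousOn_matterFactor (hk : 0 ≤ k) (hα : 0 ≤ α) (n : ℕ) :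
    ContinuousOn (matterFactor k α n) (Ici 0) := by
  refine ContinuousOn.mul (ContinuousOn.inv₀ ?_ fun z (hz : 0 ≤ z) ↦ by positivity)
    (intervalIntegral.continuous_parametric_intervalIntegral_of_continuous'
      (continuous_matterFactor_integrand hk hα n) 0 1).continuousOn
  fun_prop (disch := simp [hk])

lemma matterFactor_pos (hk : 0 ≤ k) (hα : 0 ≤ α) (n : ℕ) (hz : 0 ≤ z) :
    0 < matterFactor k α n z := by
  refine mul_pos (by positivity) (intervalIntegral.intervalIntegral_pos_of_pos_on
    (((continuous_matterFactor_integrand hk hα n).comp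
      (Continuous.prodMk_right z)).intervalIntegrable 0 1) (fun v hv ↦ ?_) zero_lt_one)
  have hv₁ : 0 < 1 - v := sub_pos.2 hv.2
  have hv₀ := hv.1
  positivity

lemma exists_matterFactor_bounds (hk : 0 ≤ k) (hα : 0 ≤ α) (n : ℕ) (b : ℝ) :
    ∃ A B : ℝ, 0 < A ∧ 0 < B ∧
      ∀ z ∈ Icc 0 b, A ≤ matterFactor k α n z ∧ matterFactor k α n z ≤ B := by
  rcases (Icc 0 b).eq_empty_or_nonempty with hb | hb
  · exact ⟨1, 1, one_pos, one_pos, by simp [hb]⟩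
  have hcont := (continuousOn_matterFactor hk hα n).mono (Icc_subset_Ici_self : Icc 0 b ⊆ Ici 0)
  obtain ⟨u, hu, hmin⟩ := isCompact_Icc.exists_isMinOn hb hcont
  obtain ⟨v, hv, hmax⟩ := isCompact_Icc.exists_isMaxOn hb hcont
  exact ⟨_, _, matterFactor_pos hk hα n hu.1, matterFactor_pos hk hα n hv.1,
    fun z hz ↦ ⟨hmin hz, hmax hz⟩⟩

lemma setIntegral_Ioc_eq_matterFactor (k α : ℝ) (n : ℕ) (ha : 0 < a) (hab : a < b) :
    ∫ ε in Ioc a b, (1 - ε * b⁻¹) ^ k * ε ^ n * (ε ^ 2 - a ^ 2) ^ α =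
      a ^ (2 * α + n + 1) *
        ((b / a - 1) ^ (k + α + 1) * matterFactor k α n (b / a - 1)) := by
  obtain ⟨z, hz, rfl⟩ : ∃ z > 0, b = a * (1 + z) :=
    ⟨b / a - 1, sub_pos.2 ((one_lt_div ha).2 hab), by field_simp; ring⟩
  have hza : a * (1 + z) / a - 1 = z := by field_simp; ring
  have hsubst := intervalIntegral.smul_integral_comp_add_mul (a := 0) (b := 1)
    (fun ε : ℝ ↦ (1 - ε * (a * (1 + z))⁻¹) ^ k * ε ^ n * (ε ^ 2 - a ^ 2) ^ α) (a * z) a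
  rw [mul_zero, add_zero, mul_one, show a + a * z = a * (1 + z) by ring] at hsubst
  rw [hza, ← intervalIntegral.integral_of_le hab.le, ← hsubst, smul_eq_mul, matterFactor,
    ← intervalIntegral.integral_const_mul, ← intervalIntegral.integral_const_mul,
    ← intervalIntegral.integral_const_mul, ← intervalIntegral.integral_const_mul]
  refine intervalIntegral.integral_congr fun v hv ↦ ?_
  rw [uIcc_of_le zero_le_one] at hv
  have hv₀ := hv.1
  have hv₁ : 0 ≤ 1 - v := sub_nonneg.2 hv.2
  have hcut : 1 - (a + a * z * v) * (a * (1 + z))⁻¹ = z * (1 + z)⁻¹ * (1 - v) := by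
    field_simp
    ring
  have hmom : (a + a * z * v) ^ 2 - a ^ 2 = a ^ 2 * (z * (v * (2 + z * v))) := by ring
  have hlin : a + a * z * v = a * (1 + z * v) := by ring
  rw [hcut, hmom, hlin, mul_rpow (by positivity) hv₁, mul_rpow hz.le (by positivity),
    inv_rpow (by positivity), mul_rpow (x := a ^ 2) (by positivity) (by positivity),
    mul_rpow hz.le (by positivity), mul_rpow hv₀ (by positivity), ← rpow_natCast_mul ha.le,
    rpow_add hz, rpow_add hz, rpow_add ha, rpow_add ha, rpow_natCast, rpow_one, rpow_one, mul_pow]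
  push_cast
  ring

end MatterFactor

/-- The excess `z = max (e ^ γ - 1) 0`, which measures how far `e ^ y` lies above the lower end
`√L₀ / r` of the matter integrals, relative to the latter. -/
noncomputable def excess (L0 : ℝ) (y : ℝ → ℝ) (r : ℝ) : ℝ :=
  max (exp (charFn L0 y r) - 1) 0

section Excess

variable {L0 r : ℝ} {y : ℝ → ℝ}

lemma charFn_eq_add_log_sub_log (hL : 0 < L0) (hr : r ≠ 0) :
    charFn L0 y r = y r + log r - log √L0 := by
  rw [charFn, log_div hL.ne' (pow_ne_zero 2 hr), log_pow, log_sqrt hL.le]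
  push_cast
  ring

lemma exp_charFn (hL : 0 < L0) (hr : 0 < r) : exp (charFn L0 y r) = exp (y r) / (√L0 / r) := by
  rw [charFn_eq_add_log_sub_log hL hr.ne', exp_sub, exp_add, exp_log hr, exp_log (by positivity),
    div_div_eq_mul_div]

lemma excess_nonneg : 0 ≤ excess L0 y r := le_max_right _ _

lemma excess_eq_zero_iff : excess L0 y r = 0 ↔ charFn L0 y r ≤ 0 := by
  rw [excess, max_eq_right_iff, sub_nonpos, exp_le_one_iff]

lemma max_charFn_le_excess : max (charFn L0 y r) 0 ≤ excess L0 y r :=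
  max_le_max_right 0 (by linarith [add_one_le_exp (charFn L0 y r)])

lemma excess_le_two_mul (h : charFn L0 y r ≤ 1) : excess L0 y r ≤ 2 * max (charFn L0 y r) 0 := by
  rcases le_total (charFn L0 y r) 0 with hγ | hγ
  · rw [excess_eq_zero_iff.2 hγ]; positivity
  · have := abs_exp_sub_one_le (x := charFn L0 y r) (by rwa [abs_of_nonneg hγ])
    rw [abs_of_nonneg hγ] at this
    rw [max_eq_left hγ]
    exact max_le ((le_abs_self _).trans this) (by linarith)

lemma exists_excess_rpow_mul_matterFactor_bounds {k α : ℝ} (hk : 0 ≤ k) (hα : 0 ≤ α) (n : ℕ) :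
    ∃ A B : ℝ, 0 < A ∧ 0 < B ∧ ∀ (L0 : ℝ) (y : ℝ → ℝ) (r : ℝ), charFn L0 y r ≤ 1 →
      A * max (charFn L0 y r) 0 ^ (k + α + 1) ≤
          excess L0 y r ^ (k + α + 1) * matterFactor k α n (excess L0 y r) ∧
        excess L0 y r ^ (k + α + 1) * matterFactor k α n (excess L0 y r) ≤
          B * max (charFn L0 y r) 0 ^ (k + α + 1) := by
  obtain ⟨A, B, hA, hB, hAB⟩ := exists_matterFactor_bounds hk hα n 2
  refine ⟨A, 2 ^ (k + α + 1) * B, hA, by positivity, fun L0 y r hγ ↦ ?_⟩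
  have hle := excess_le_two_mul hγ
  have hmax : max (charFn L0 y r) 0 ≤ 1 := max_le hγ zero_le_one
  obtain ⟨hF, hF'⟩ := hAB (excess L0 y r) ⟨excess_nonneg, by linarith⟩
  have hF₀ := hA.le.trans hF
  have hz : 0 ≤ excess L0 y r := excess_nonneg
  constructor
  · rw [mul_comm]
    gcongr
    exact max_charFn_le_excess
  · calc excess L0 y r ^ (k + α + 1) * matterFactor k α n (excess L0 y r)
        ≤ (2 * max (charFn L0 y r) 0) ^ (k + α + 1) * B := by gcongr
      _ = 2 ^ (k + α + 1) * B * max (charFn L0 y r) 0 ^ (k + α + 1) := by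
        rw [mul_rpow zero_le_two (le_max_right _ _)]; ring

lemma setIntegral_eq_excess {k α : ℝ} (hp : k + α + 1 ≠ 0) (n : ℕ) (hL : 0 < L0) (hr : 0 < r) :
    ∫ ε in Ioc (√L0 / r) (exp (y r)),
        (1 - ε * exp (-(y r))) ^ k * ε ^ n * (ε ^ 2 - L0 / r ^ 2) ^ α =
      (√L0 / r) ^ (2 * α + n + 1) *
        (excess L0 y r ^ (k + α + 1) * matterFactor k α n (excess L0 y r)) := by
  have ha : 0 < √L0 / r := by positivity
  rcases lt_or_ge (√L0 / r) (exp (y r)) with h | h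
  · rw [show L0 / r ^ 2 = (√L0 / r) ^ 2 by rw [div_pow, sq_sqrt hL.le], exp_neg,
      setIntegral_Ioc_eq_matterFactor k α n ha h, excess, exp_charFn hL hr,
      max_eq_left (sub_nonneg.2 ((one_le_div ha).2 h.le))]
  · have hγ : charFn L0 y r ≤ 0 := by
      rw [← exp_le_one_iff, exp_charFn hL hr]
      exact (div_le_one ha).2 h
    rw [Ioc_eq_empty (not_lt.2 h), setIntegral_empty, excess_eq_zero_iff.2 hγ, zero_rpow hp,
      zero_mul, mul_zero]

end Excess

section Matter

variable {k ℓ L0 r : ℝ} {y : ℝ → ℝ}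

lemma rpow_mul_sqrt_div_rpow (ℓ : ℝ) (hL : 0 < L0) (hr : 0 < r) :
    r ^ (2 * ℓ) * (√L0 / r) ^ (2 * ℓ + 4) = L0 ^ (ℓ + 2) / r ^ 4 := by
  rw [div_rpow (sqrt_nonneg L0) hr.le, sqrt_eq_rpow, ← rpow_mul hL.le, rpow_add hr,
    show 1 / 2 * (2 * ℓ + 4) = ℓ + 2 by ring, show (4 : ℝ) = (4 : ℕ) by norm_num, rpow_natCast]
  field_simp

lemma rho_eq (hkℓ : k + ℓ + 3 / 2 ≠ 0) (hL : 0 < L0) (hr : 0 < r) :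
    rho k ℓ L0 y r = cConst ℓ * L0 ^ (ℓ + 2) / r ^ 4 *
      (excess L0 y r ^ (k + ℓ + 3 / 2) * matterFactor k (ℓ + 1 / 2) 2 (excess L0 y r)) := by
  have hp : k + (ℓ + 1 / 2) + 1 = k + ℓ + 3 / 2 := by ring
  rw [rho, setIntegral_eq_excess (hp ▸ hkℓ) 2 hL hr, hp,
    show 2 * (ℓ + 1 / 2) + ((2 : ℕ) : ℝ) + 1 = 2 * ℓ + 4 by push_cast; ring]
  linear_combination cConst ℓ * (excess L0 y r ^ (k + ℓ + 3 / 2) *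
    matterFactor k (ℓ + 1 / 2) 2 (excess L0 y r)) * rpow_mul_sqrt_div_rpow ℓ hL hr

lemma pres_eq (hkℓ : k + ℓ + 3 / 2 + 1 ≠ 0) (hL : 0 < L0) (hr : 0 < r) :
    pres k ℓ L0 y r = cConst ℓ / (2 * ℓ + 3) * L0 ^ (ℓ + 2) / r ^ 4 *
      (excess L0 y r ^ (k + ℓ + 3 / 2 + 1) * matterFactor k (ℓ + 3 / 2) 0 (excess L0 y r)) := by
  have hp : k + (ℓ + 3 / 2) + 1 = k + ℓ + 3 / 2 + 1 := by ring
  have hint := setIntegral_eq_excess (y := y) (hp ▸ hkℓ) 0 hL hr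
  simp only [pow_zero, mul_one] at hint
  rw [pres, hint, hp,
    show 2 * (ℓ + 3 / 2) + ((0 : ℕ) : ℝ) + 1 = 2 * ℓ + 4 by push_cast; ring]
  linear_combination cConst ℓ / (2 * ℓ + 3) * (excess L0 y r ^ (k + ℓ + 3 / 2 + 1) *
    matterFactor k (ℓ + 3 / 2) 0 (excess L0 y r)) * rpow_mul_sqrt_div_rpow ℓ hL hr

lemma rho_eq_zero (hkℓ : k + ℓ + 3 / 2 ≠ 0) (hL : 0 < L0) (hr : 0 < r)
    (hγ : charFn L0 y r ≤ 0) : rho k ℓ L0 y r = 0 := by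
  rw [rho_eq hkℓ hL hr, excess_eq_zero_iff.2 hγ, zero_rpow hkℓ, zero_mul, mul_zero]

lemma pres_eq_zero (hkℓ : k + ℓ + 3 / 2 + 1 ≠ 0) (hL : 0 < L0) (hr : 0 < r)
    (hγ : charFn L0 y r ≤ 0) : pres k ℓ L0 y r = 0 := by
  rw [pres_eq hkℓ hL hr, excess_eq_zero_iff.2 hγ, zero_rpow hkℓ, zero_mul, mul_zero]

lemma rho_pos (hk : 0 ≤ k) (hl : -(1 / 2) ≤ ℓ) (hL : 0 < L0) (hr : 0 < r)
    (hγ : 0 < charFn L0 y r) : 0 < rho k ℓ L0 y r := by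
  have hz : 0 < excess L0 y r := (lt_max_of_lt_left hγ).trans_le max_charFn_le_excess
  have hF := matterFactor_pos hk (show 0 ≤ ℓ + 1 / 2 by linarith) 2 hz.le
  have hc : 0 < cConst ℓ := cConst_pos (by linarith)
  rw [rho_eq (by linarith) hL hr]
  positivity

lemma rho_nonneg (hk : 0 ≤ k) (hl : -(1 / 2) ≤ ℓ) (hL : 0 < L0) (hr : 0 < r) :
    0 ≤ rho k ℓ L0 y r := by
  rcases le_or_gt (charFn L0 y r) 0 with hγ | hγ
  · exact (rho_eq_zero (by linarith) hL hr hγ).ge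
  · exact (rho_pos hk hl hL hr hγ).le

lemma pres_nonneg (hk : 0 ≤ k) (hl : -1 < ℓ) (hL : 0 < L0) (hr : 0 < r) :
    0 ≤ pres k ℓ L0 y r := by
  have hF := matterFactor_pos hk (show 0 ≤ ℓ + 3 / 2 by linarith) 0
    (excess_nonneg : 0 ≤ excess L0 y r)
  have hc : 0 < cConst ℓ / (2 * ℓ + 3) := div_pos (cConst_pos hl) (by linarith)
  have hz : 0 ≤ excess L0 y r := excess_nonneg
  rw [pres_eq (by linarith) hL hr]
  positivity

lemma continuousOn_rho (hk : 0 ≤ k) (hl : -(1 / 2) ≤ ℓ) (hL : 0 < L0)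
    (hy : ContinuousOn y (Ioi 0)) : ContinuousOn (rho k ℓ L0 y) (Ioi 0) := by
  have hγ : ContinuousOn (charFn L0 y) (Ioi 0) :=
    ((hy.add (continuousOn_log.mono fun r (hr : 0 < r) ↦ hr.ne')).sub continuousOn_const).congr
      fun r (hr : 0 < r) ↦ charFn_eq_add_log_sub_log hL hr.ne'
  have hexcess : ContinuousOn (excess L0 y) (Ioi 0) :=
    (hγ.rexp.sub continuousOn_const).sup continuousOn_const
  have hF := (continuousOn_matterFactor hk (show 0 ≤ ℓ + 1 / 2 by linarith) 2).comp hexcess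
    fun _ _ ↦ excess_nonneg
  have hz := hexcess.rpow_const (p := k + ℓ + 3 / 2) fun _ _ ↦ Or.inr (by linarith)
  have hr : ContinuousOn (fun r : ℝ ↦ cConst ℓ * L0 ^ (ℓ + 2) / r ^ 4) (Ioi 0) :=
    continuousOn_const.div (continuousOn_pow 4) fun r (hr : 0 < r) ↦ by positivity
  exact (hr.mul (hz.mul hF)).congr fun r hr ↦ rho_eq (by linarith) hL hr

lemma exists_rho_bounds (hk : 0 ≤ k) (hl : -(1 / 2) ≤ ℓ) (hL : 0 < L0) :
    ∃ A B : ℝ, 0 < A ∧ 0 < B ∧ ∀ (y : ℝ → ℝ), ∀ r > 0, charFn L0 y r ≤ 1 →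
      A * max (charFn L0 y r) 0 ^ (k + ℓ + 3 / 2) ≤ r ^ 4 * rho k ℓ L0 y r ∧
        r ^ 4 * rho k ℓ L0 y r ≤ B * max (charFn L0 y r) 0 ^ (k + ℓ + 3 / 2) := by
  obtain ⟨A, B, hA, hB, hAB⟩ :=
    exists_excess_rpow_mul_matterFactor_bounds hk (show 0 ≤ ℓ + 1 / 2 by linarith) 2
  have hC : 0 < cConst ℓ * L0 ^ (ℓ + 2) := mul_pos (cConst_pos (by linarith)) (by positivity)
  refine ⟨_, _, mul_pos hC hA, mul_pos hC hB, fun y r hr hγ ↦ ?_⟩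
  have hp : k + (ℓ + 1 / 2) + 1 = k + ℓ + 3 / 2 := by ring
  obtain ⟨hl', hu⟩ := hAB L0 y r hγ
  rw [hp] at hl' hu
  rw [rho_eq (by linarith) hL hr, ← mul_assoc, mul_div_cancel₀ _ (by positivity)]
  exact ⟨(mul_assoc _ A _).trans_le (mul_le_mul_of_nonneg_left hl' hC.le),
    (mul_le_mul_of_nonneg_left hu hC.le).trans_eq (mul_assoc _ B _).symm⟩

lemma exists_pres_le (hk : 0 ≤ k) (hl : -1 < ℓ) (hL : 0 < L0) :
    ∃ B : ℝ, 0 < B ∧ ∀ (y : ℝ → ℝ), ∀ r > 0, charFn L0 y r ≤ 1 →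
      r ^ 4 * pres k ℓ L0 y r ≤ B * max (charFn L0 y r) 0 ^ (k + ℓ + 3 / 2 + 1) := by
  obtain ⟨_, B, _, hB, hAB⟩ :=
    exists_excess_rpow_mul_matterFactor_bounds hk (show 0 ≤ ℓ + 3 / 2 by linarith) 0
  have hC : 0 < cConst ℓ / (2 * ℓ + 3) * L0 ^ (ℓ + 2) :=
    mul_pos (div_pos (cConst_pos hl) (by linarith)) (by positivity)
  refine ⟨_, mul_pos hC hB, fun y r hr hγ ↦ ?_⟩
  have hp : k + (ℓ + 3 / 2) + 1 = k + ℓ + 3 / 2 + 1 := by ring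
  have hu := (hAB L0 y r hγ).2
  rw [hp] at hu
  rw [pres_eq (by linarith) hL hr, ← mul_assoc, mul_div_cancel₀ _ (by positivity)]
  exact (mul_le_mul_of_nonneg_left hu hC.le).trans_eq (mul_assoc _ B _).symm

end Matter

/-! ### Quasi shell solutions -/

section InnerRadius

variable {L0 r : ℝ} {y : ℝ → ℝ}

lemma innerRadius_pos (hL : 0 < L0) : 0 < innerRadius L0 y := by
  unfold innerRadius
  positivity

lemma charFn_eq_sub_add_log_div (hL : 0 < L0) (hr : r ≠ 0) :
    charFn L0 y r = y r - y 0 + log (r / innerRadius L0 y) := by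
  rw [charFn_eq_add_log_sub_log hL hr, log_div hr (innerRadius_pos hL).ne', innerRadius,
    log_mul (by positivity) (by positivity), log_exp]
  ring

lemma hasDerivAt_charFn {y' : ℝ} (hL : 0 < L0) (hr : r ≠ 0) (hy : HasDerivAt y y' r) :
    HasDerivAt (charFn L0 y) (y' + r⁻¹) r :=
  ((hy.add (hasDerivAt_log hr)).sub_const _).congr_of_eventuallyEq
    ((eventually_ne_nhds hr).mono fun _ hu ↦ charFn_eq_add_log_sub_log hL hu)

end InnerRadius

lemma hawkingMass_nonneg {k ℓ L0 : ℝ} (hk : 0 ≤ k) (hl : -(1 / 2) ≤ ℓ) (hL : 0 < L0)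
    (y : ℝ → ℝ) (r : ℝ) : 0 ≤ hawkingMass k ℓ L0 y r :=
  mul_nonneg (by positivity) (setIntegral_nonneg measurableSet_Ioc fun s hs ↦
    mul_nonneg (sq_nonneg s) (rho_nonneg hk hl hL hs.1))

namespace QuasiShell

variable {k ℓ L0 r : ℝ} {y : ℝ → ℝ}

lemma antitoneOn (hy : QuasiShell k ℓ L0 y) (hk : 0 ≤ k) (hl : -(1 / 2) ≤ ℓ) (hL : 0 < L0) :
    AntitoneOn y (Ici 0) := by
  refine antitoneOn_of_hasDerivWithinAt_nonpos (convex_Ici 0) hy.1.continuousOn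
    (fun r hr ↦ (hy.2 r (interior_Ici.subset hr)).2.hasDerivWithinAt) fun r hr ↦ ?_
  have hr₀ : 0 < r := interior_Ici.subset hr
  have hm := hawkingMass_nonneg hk hl hL y r
  have hp := pres_nonneg (ℓ := ℓ) (y := y) hk (by linarith) hL hr₀
  have hinv : 0 ≤ (1 - 2 * hawkingMass k ℓ L0 y r / r)⁻¹ :=
    inv_nonneg.2 (sub_nonneg.2 (hy.2 r hr₀).1.le)
  exact mul_nonpos_of_nonpos_of_nonneg (neg_nonpos.2 hinv) (by positivity)

lemma charFn_le_log (hy : QuasiShell k ℓ L0 y) (hk : 0 ≤ k) (hl : -(1 / 2) ≤ ℓ) (hL : 0 < L0)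
    (hr : 0 < r) : charFn L0 y r ≤ log (r / innerRadius L0 y) := by
  rw [charFn_eq_sub_add_log_div hL hr.ne']
  linarith [hy.antitoneOn hk hl hL self_mem_Ici hr.le hr.le]

lemma charFn_nonpos (hy : QuasiShell k ℓ L0 y) (hk : 0 ≤ k) (hl : -(1 / 2) ≤ ℓ) (hL : 0 < L0)
    (hr : 0 < r) (hrR : r ≤ innerRadius L0 y) : charFn L0 y r ≤ 0 :=
  (hy.charFn_le_log hk hl hL hr).trans
    (log_nonpos (div_pos hr (innerRadius_pos hL)).le ((div_le_one (innerRadius_pos hL)).2 hrR))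

lemma hawkingMass_eq_zero (hy : QuasiShell k ℓ L0 y) (hk : 0 ≤ k) (hl : -(1 / 2) ≤ ℓ)
    (hL : 0 < L0) (hrR : r ≤ innerRadius L0 y) : hawkingMass k ℓ L0 y r = 0 := by
  rw [hawkingMass, setIntegral_eq_zero_of_forall_eq_zero fun s hs ↦ ?_, mul_zero]
  rw [rho_eq_zero (by linarith) hL hs.1 (hy.charFn_nonpos hk hl hL hs.1 (hs.2.trans hrR)),
    mul_zero]

lemma charFn_innerRadius (hy : QuasiShell k ℓ L0 y) (hk : 0 ≤ k) (hl : -(1 / 2) ≤ ℓ)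
    (hL : 0 < L0) : charFn L0 y (innerRadius L0 y) = 0 := by
  have hR : 0 < innerRadius L0 y := innerRadius_pos hL
  obtain ⟨r, hr, hslope⟩ := exists_hasDerivAt_eq_slope y _ hR
    (hy.1.continuousOn.mono Icc_subset_Ici_self) fun r hr ↦ (hy.2 r hr.1).2
  rw [hy.hawkingMass_eq_zero hk hl hL hr.2.le,
    pres_eq_zero (by linarith) hL hr.1 (hy.charFn_nonpos hk hl hL hr.1 hr.2.le), zero_div,
    mul_zero, add_zero, mul_zero, sub_zero, mul_zero, eq_comm, div_eq_zero_iff,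
    or_iff_left hR.ne'] at hslope
  rw [charFn_eq_sub_add_log_div hL hR.ne', hslope, div_self hR.ne', log_one, add_zero]

lemma hasDerivAt_hawkingMass (hy : QuasiShell k ℓ L0 y) (hk : 0 ≤ k) (hl : -(1 / 2) ≤ ℓ)
    (hL : 0 < L0) (hr : 0 < r) :
    HasDerivAt (hawkingMass k ℓ L0 y) (4 * π * (r ^ 2 * rho k ℓ L0 y r)) r := by
  have hR : 0 < innerRadius L0 y := innerRadius_pos hL
  have hcont : ContinuousOn (fun s ↦ s ^ 2 * rho k ℓ L0 y s) (Ioi 0) :=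
    (continuousOn_pow 2).mul (continuousOn_rho hk hl hL
      fun s hs ↦ (hy.2 s hs).2.continuousAt.continuousWithinAt)
  have hinner : IntervalIntegrable (fun s ↦ s ^ 2 * rho k ℓ L0 y s) volume 0
      (innerRadius L0 y) :=
    (intervalIntegrable_const (c := (0 : ℝ))).congr fun s hs ↦ by
      rw [uIoc_of_le hR.le] at hs
      rw [rho_eq_zero (by linarith) hL hs.1 (hy.charFn_nonpos hk hl hL hs.1 hs.2), mul_zero]
  have houter : IntervalIntegrable (fun s ↦ s ^ 2 * rho k ℓ L0 y s) volume
      (innerRadius L0 y) r :=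
    (hcont.mono fun s hs ↦ (lt_min hR hr).trans_le hs.1).intervalIntegrable
  refine ((intervalIntegral.integral_hasDerivAt_right (hinner.trans houter)
    (hcont.stronglyMeasurableAtFilter isOpen_Ioi r hr)
    (hcont.continuousAt (Ioi_mem_nhds hr))).const_mul (4 * π)).congr_of_eventuallyEq ?_
  filter_upwards [Ioi_mem_nhds hr] with u hu
  rw [hawkingMass, intervalIntegral.integral_of_le (le_of_lt hu)]

end QuasiShell

section Rescaling

variable {A q δ R r γ ρ p : ℝ}

lemma max_zero_rpow_eq_mul (hδ : 0 < δ) (γ q : ℝ) :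
    max γ 0 ^ q = δ ^ q * max (γ / δ) 0 ^ q := by
  rw [← mul_rpow hδ.le (le_max_right _ _), mul_max_of_nonneg _ _ hδ.le, mul_zero,
    mul_div_cancel₀ _ hδ.ne']

lemma mul_rpow_le_rescaled_density (hδ : 0 < δ) (hδR : δ ^ (q + 1) = R ^ 2) (hA : 0 ≤ A)
    (hr : 0 < r) (hrR : r ≤ 2 * R) (h : A * max γ 0 ^ q ≤ r ^ 4 * ρ) :
    π * A * max (γ / δ) 0 ^ q ≤ δ * (4 * π * (r ^ 2 * ρ)) := by
  rw [max_zero_rpow_eq_mul hδ] at h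
  refine le_of_mul_le_mul_right ?_ (pow_pos hr 2)
  calc π * A * max (γ / δ) 0 ^ q * r ^ 2 ≤ π * A * max (γ / δ) 0 ^ q * (2 * R) ^ 2 := by gcongr
    _ = 4 * π * δ * (A * (δ ^ q * max (γ / δ) 0 ^ q)) := by
      rw [mul_pow, ← hδR, rpow_add_one hδ.ne']; ring
    _ ≤ 4 * π * δ * (r ^ 4 * ρ) := by gcongr
    _ = δ * (4 * π * (r ^ 2 * ρ)) * r ^ 2 := by ring

lemma rescaled_density_le_mul_rpow (hδ : 0 < δ) (hδR : δ ^ (q + 1) = R ^ 2) (hA : 0 ≤ A)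
    (hR : 0 < R) (hRr : R ≤ r) (h : r ^ 4 * ρ ≤ A * max γ 0 ^ q) :
    δ * (4 * π * (r ^ 2 * ρ)) ≤ 4 * π * A * max (γ / δ) 0 ^ q := by
  rw [max_zero_rpow_eq_mul hδ] at h
  refine le_of_mul_le_mul_right ?_ (pow_pos (hR.trans_le hRr) 2)
  calc δ * (4 * π * (r ^ 2 * ρ)) * r ^ 2 = 4 * π * δ * (r ^ 4 * ρ) := by ring
    _ ≤ 4 * π * δ * (A * (δ ^ q * max (γ / δ) 0 ^ q)) := by gcongr
    _ = 4 * π * A * max (γ / δ) 0 ^ q * R ^ 2 := by rw [← hδR, rpow_add_one hδ.ne']; ring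
    _ ≤ 4 * π * A * max (γ / δ) 0 ^ q * r ^ 2 := by gcongr

lemma rescaled_pressure_le_mul_rpow (hδ : 0 < δ) (hδR : δ ^ (q + 1) = R ^ 2) (hA : 0 ≤ A)
    (hR : 0 < R) (hRr : R ≤ r) (h : r ^ 4 * p ≤ A * max γ 0 ^ (q + 1)) :
    R * (4 * π * r * p) ≤ 4 * π * A * max (γ / δ) 0 ^ (q + 1) := by
  rw [max_zero_rpow_eq_mul hδ, hδR] at h
  refine le_of_mul_le_mul_right ?_ (pow_pos (hR.trans_le hRr) 3)
  calc R * (4 * π * r * p) * r ^ 3 = 4 * π * R * (r ^ 4 * p) := by ring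
    _ ≤ 4 * π * R * (A * (R ^ 2 * max (γ / δ) 0 ^ (q + 1))) := by gcongr
    _ = 4 * π * A * max (γ / δ) 0 ^ (q + 1) * R ^ 3 := by ring
    _ ≤ 4 * π * A * max (γ / δ) 0 ^ (q + 1) * r ^ 3 := by gcongr

lemma hasDerivAt_comp_mul_one_add_mul {f : ℝ → ℝ} {f' t : ℝ}
    (hf : HasDerivAt f f' (R * (1 + t * δ))) :
    HasDerivAt (fun t ↦ f (R * (1 + t * δ))) (f' * (R * δ)) t :=
  hf.comp t (((hasDerivAt_mul_const δ).const_add 1).const_mul R)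

lemma mul_slope_eq_rescaledSlope (hR : R ≠ 0) {s : ℝ} (hs : s ≠ 0) (m X : ℝ) :
    R * (-(1 - 2 * m / (R * s))⁻¹ * (X + m / (R * s) ^ 2) + (R * s)⁻¹) =
      rescaledSlope s (m / R) (R * X) := by
  rw [rescaledSlope, show 2 * (m / R) / s = 2 * m / (R * s) by field_simp]
  field_simp
  ring

lemma exists_mem_Ioc_eq_mul_one_add_mul {t : ℝ} (hR : 0 < R) (hδ : 0 < δ) (hRr : R < r)
    (hr : r ≤ R * (1 + t * δ)) : ∃ u ∈ Ioc 0 t, R * (1 + u * δ) = r := by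
  refine ⟨(r / R - 1) / δ, ⟨div_pos (sub_pos.2 ((one_lt_div hR).2 hRr)) hδ, ?_⟩, ?_⟩
  · rw [div_le_iff₀ hδ, sub_le_iff_le_add', div_le_iff₀' hR]
    exact hr
  · field_simp
    ring

end Rescaling

namespace QuasiShell

variable {k ℓ L0 R δ t : ℝ} {y : ℝ → ℝ}

lemma hasDerivAt_rescaled_charFn (hy : QuasiShell k ℓ L0 y) (hL : 0 < L0) (hδ : δ ≠ 0)
    (hR : 0 < R) (ht : 0 < 1 + t * δ) :
    HasDerivAt (fun t ↦ charFn L0 y (R * (1 + t * δ)) / δ)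
      (rescaledSlope (1 + t * δ) (hawkingMass k ℓ L0 y (R * (1 + t * δ)) / R)
        (R * (4 * π * (R * (1 + t * δ)) * pres k ℓ L0 y (R * (1 + t * δ))))) t := by
  have hr : 0 < R * (1 + t * δ) := mul_pos hR ht
  refine ((hasDerivAt_comp_mul_one_add_mul
    (hasDerivAt_charFn hL hr.ne' (hy.2 _ hr).2)).div_const δ).congr_deriv ?_
  rw [← mul_assoc, mul_div_cancel_right₀ _ hδ, mul_comm,
    mul_slope_eq_rescaledSlope hR.ne' ht.ne']

lemma hasDerivAt_rescaled_hawkingMass (hy : QuasiShell k ℓ L0 y) (hk : 0 ≤ k)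
    (hl : -(1 / 2) ≤ ℓ) (hL : 0 < L0) (hR : 0 < R) (ht : 0 < 1 + t * δ) :
    HasDerivAt (fun t ↦ hawkingMass k ℓ L0 y (R * (1 + t * δ)) / R)
      (δ * (4 * π * ((R * (1 + t * δ)) ^ 2 * rho k ℓ L0 y (R * (1 + t * δ))))) t := by
  refine ((hasDerivAt_comp_mul_one_add_mul
    (hy.hasDerivAt_hawkingMass hk hl hL (mul_pos hR ht))).div_const R).congr_deriv ?_
  rw [mul_comm, mul_assoc, mul_div_cancel_left₀ _ hR.ne']

lemma charFn_mul_one_add_le (hy : QuasiShell k ℓ L0 y) (hk : 0 ≤ k) (hl : -(1 / 2) ≤ ℓ)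
    (hL : 0 < L0) {x : ℝ} (hx : 0 < 1 + x) : charFn L0 y (innerRadius L0 y * (1 + x)) ≤ x := by
  have hR : 0 < innerRadius L0 y := innerRadius_pos hL
  have hlog := hy.charFn_le_log hk hl hL (mul_pos hR hx)
  rw [mul_div_cancel_left₀ _ hR.ne'] at hlog
  linarith [log_le_sub_one_of_pos hx]

end QuasiShell

theorem exists_rescaledShell {k ℓ L0 : ℝ} (hk : 0 ≤ k) (hl : -(1 / 2) ≤ ℓ) (hL : 0 < L0) :
    ∃ a₁ a₂ b : ℝ, 0 < a₁ ∧ 0 < a₂ ∧ 0 < b ∧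
      ∀ (y : ℝ → ℝ) (δ T : ℝ), QuasiShell k ℓ L0 y → 0 < δ → T * δ ≤ 1 →
        δ ^ (k + ℓ + 3 / 2 + 1) = innerRadius L0 y ^ 2 →
        RescaledShell (k + ℓ + 3 / 2) a₁ a₂ b δ T
          (fun t ↦ charFn L0 y (innerRadius L0 y * (1 + t * δ)) / δ)
          (fun t ↦ hawkingMass k ℓ L0 y (innerRadius L0 y * (1 + t * δ)) / innerRadius L0 y)
          (fun t ↦ δ * (4 * π * ((innerRadius L0 y * (1 + t * δ)) ^ 2 *
            rho k ℓ L0 y (innerRadius L0 y * (1 + t * δ)))))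
          (fun t ↦ innerRadius L0 y * (4 * π * (innerRadius L0 y * (1 + t * δ)) *
            pres k ℓ L0 y (innerRadius L0 y * (1 + t * δ)))) := by
  have hl₁ : -1 < ℓ := by linarith
  obtain ⟨A₁, A₂, hA₁, hA₂, hrho⟩ := exists_rho_bounds hk hl hL
  obtain ⟨A₃, hA₃, hpres⟩ := exists_pres_le hk hl₁ hL
  refine ⟨π * A₁, 4 * π * A₂, 4 * π * A₃, by positivity, by positivity, by positivity,
    fun y δ T hy hδ hTδ hδR ↦ ?_⟩
  have hR : 0 < innerRadius L0 y := innerRadius_pos hL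
  set R := innerRadius L0 y
  have hs : ∀ t ∈ Icc 0 T, 1 ≤ 1 + t * δ := fun t ht ↦
    le_add_of_nonneg_right (mul_nonneg ht.1 hδ.le)
  have hs₀ : ∀ t ∈ Icc 0 T, 0 < 1 + t * δ := fun t ht ↦ zero_lt_one.trans_le (hs t ht)
  have hr : ∀ t ∈ Icc 0 T, 0 < R * (1 + t * δ) := fun t ht ↦ mul_pos hR (hs₀ t ht)
  have hRr : ∀ t ∈ Icc 0 T, R ≤ R * (1 + t * δ) := fun t ht ↦ le_mul_of_one_le_right hR.le (hs t ht)
  have htδ : ∀ t ∈ Icc 0 T, t * δ ≤ 1 := fun t ht ↦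
    (mul_le_mul_of_nonneg_right ht.2 hδ.le).trans hTδ
  have hγ : ∀ t ∈ Icc 0 T, charFn L0 y (R * (1 + t * δ)) ≤ t * δ := fun t ht ↦
    hy.charFn_mul_one_add_le hk hl hL (hs₀ t ht)
  have hγ₁ : ∀ t ∈ Icc 0 T, charFn L0 y (R * (1 + t * δ)) ≤ 1 := fun t ht ↦
    (hγ t ht).trans (htδ t ht)
  exact {
    δ_nonneg := hδ.le
    mul_le_one := hTδ
    G_zero := by
      rw [zero_mul, add_zero, mul_one, hy.charFn_innerRadius hk hl hL, zero_div]
    M_zero := by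
      rw [zero_mul, add_zero, mul_one, hy.hawkingMass_eq_zero hk hl hL le_rfl, zero_div]
    hasDerivAt_G := fun t ht ↦ hy.hasDerivAt_rescaled_charFn hL hδ.ne' hR (hs₀ t ht)
    hasDerivAt_M := fun t ht ↦ hy.hasDerivAt_rescaled_hawkingMass hk hl hL hR (hs₀ t ht)
    G_le_self := fun t ht ↦ (div_le_iff₀ hδ).2 (hγ t ht)
    two_mul_M_lt := fun t ht ↦ by
      rw [← mul_div_assoc, div_lt_iff₀' hR]
      exact (div_lt_one (hr t ht)).1 (hy.2 _ (hr t ht)).1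
    Q_nonneg := fun t ht ↦ mul_nonneg hR.le (mul_nonneg (mul_pos (by positivity) (hr t ht)).le
      (pres_nonneg hk hl₁ hL (hr t ht)))
    le_M' := fun t ht ↦ mul_rpow_le_rescaled_density hδ hδR hA₁.le (hr t ht)
      (by nlinarith [htδ t ht]) (hrho y _ (hr t ht) (hγ₁ t ht)).1
    M'_le := fun t ht ↦ rescaled_density_le_mul_rpow hδ hδR hA₂.le hR (hRr t ht)
      (hrho y _ (hr t ht) (hγ₁ t ht)).2
    Q_le := fun t ht ↦ rescaled_pressure_le_mul_rpow hδ hδR hA₃.le hR (hRr t ht)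
      (hpres y _ (hr t ht) (hγ₁ t ht)) }

lemma mul_one_add_le_div {B R q : ℝ} (hB : 0 ≤ B) (hR : 0 < R) (hR₁ : R ≤ 1) (hq : 0 < q) :
    R * (1 + B * R ^ (2 / q)) ≤ R * (1 + B * R ^ (1 / q)) / (1 - 1 / 2 * R ^ (2 / q)) := by
  have hδ₁ : R ^ (2 / q) ≤ 1 := rpow_le_one hR.le hR₁ (by positivity)
  have hδ₀ : 0 < R ^ (2 / q) := by positivity
  calc R * (1 + B * R ^ (2 / q)) ≤ R * (1 + B * R ^ (1 / q)) := by
        gcongr R * (1 + B * ?_)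
        exact rpow_le_rpow_of_exponent_ge hR hR₁ (by gcongr; norm_num)
    _ ≤ R * (1 + B * R ^ (1 / q)) / (1 - 1 / 2 * R ^ (2 / q)) :=
        le_div_self (by positivity) (by linarith) (by linarith)

theorem shell_support_general (k ℓ L0 : ℝ) (hk : 0 ≤ k) (hl : -(1 / 2) ≤ ℓ) (hL : 0 < L0) :
    ∃ B₀ B₁ ε : ℝ, 0 < B₀ ∧ B₀ < B₁ ∧ 0 < ε ∧
      ∀ y : ℝ → ℝ, QuasiShell k ℓ L0 y → innerRadius L0 y ≤ ε →
        (∀ r, innerRadius L0 y < r →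
            r ≤ innerRadius L0 y *
              (1 + B₀ * innerRadius L0 y ^ (2 / (k + ℓ + 3 / 2 + 1))) →
            0 < rho k ℓ L0 y r) ∧
          ∃ r₁ : ℝ,
            innerRadius L0 y *
              (1 + B₀ * innerRadius L0 y ^ (2 / (k + ℓ + 3 / 2 + 1))) < r₁ ∧
            r₁ ≤ innerRadius L0 y *
              (1 + B₁ * innerRadius L0 y ^ (2 / (k + ℓ + 3 / 2 + 1))) ∧
            charFn L0 y r₁ ≤ 0 ∧ rho k ℓ L0 y r₁ = 0 ∧ pres k ℓ L0 y r₁ = 0 := by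
  obtain ⟨a₁, a₂, b, ha₁, ha₂, hb, hshell⟩ := exists_rescaledShell hk hl hL
  have hq : 0 < k + ℓ + 3 / 2 := by linarith
  obtain ⟨t₀, T, δ₀, ht₀, htT, hδ₀, hTδ₀, hzero⟩ :=
    RescaledShell.exists_zero_of_small hq.le ha₁ ha₂ hb.le
  refine ⟨t₀, T, δ₀ ^ ((k + ℓ + 3 / 2 + 1) / 2), ht₀, htT, by positivity, fun y hy hε ↦ ?_⟩
  have hR : 0 < innerRadius L0 y := innerRadius_pos hL
  set R := innerRadius L0 y
  set δ := R ^ (2 / (k + ℓ + 3 / 2 + 1)) with hδ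
  have hδpos : 0 < δ := by positivity
  have hδR : δ ^ (k + ℓ + 3 / 2 + 1) = R ^ 2 := by
    rw [hδ, ← rpow_mul hR.le, div_mul_cancel₀ _ (by linarith), rpow_two]
  have hδle : δ ≤ δ₀ := by
    rw [← rpow_le_rpow_iff hδpos.le hδ₀.le (show 0 < (k + ℓ + 3 / 2 + 1) / 2 by linarith)]
    convert hε using 1
    rw [hδ, ← rpow_mul hR.le, div_mul_div_cancel₀ (by linarith), div_self two_ne_zero, rpow_one]
  have hTδ : T * δ ≤ 1 := (mul_le_mul_of_nonneg_left hδle (ht₀.trans htT).le).trans hTδ₀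
  obtain ⟨hG, t, ht, hGt⟩ := hzero δ hδle _ _ _ _ (hshell y δ T hy hδpos hTδ hδR)
  have hr₁ : 0 < R * (1 + t * δ) := by have := ht₀.trans ht.1; positivity
  have hγ₁ : charFn L0 y (R * (1 + t * δ)) ≤ 0 := by
    simpa only [zero_mul] using (div_le_iff₀ hδpos).1 hGt
  refine ⟨fun r hRr hrt₀ ↦ rho_pos hk hl hL (hR.trans hRr) ?_, R * (1 + t * δ), ?_, ?_, hγ₁,
    rho_eq_zero hq.ne' hL hr₁ hγ₁, pres_eq_zero (by linarith) hL hr₁ hγ₁⟩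
  · obtain ⟨u, hu, rfl⟩ := exists_mem_Ioc_eq_mul_one_add_mul hR hδpos hRr hrt₀
    exact (div_pos_iff_of_pos_right hδpos).1 (hG u hu)
  · gcongr
    exact ht.1
  · gcongr
    exact ht.2

/-- Matter is supported beyond `R₀(1+B₀R₀^{2/(q+1)})` and vanishes
at some radius `r₁ ≤ R₀(1+B₂R₀^{1/(q+1)})/(1-B₁R₀^{2/(q+1)})`, for quasi shell
solutions with small inner radius satisfying the Buchdahl bound. -/
theorem shell_support (k ℓ L0 : ℝ) (hk : 0 ≤ k) (hl : -(1 / 2) ≤ ℓ) (hL : 0 < L0) :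
    ∃ B0 B1 B2 ε : ℝ, 0 < B0 ∧ 0 < B1 ∧ 0 < B2 ∧ 0 < ε ∧
      ∀ y : ℝ → ℝ, QuasiShell k ℓ L0 y →
        (∀ r > (0 : ℝ), 2 * hawkingMass k ℓ L0 y r / r ≤ 8 / 9) →
        0 < innerRadius L0 y → innerRadius L0 y ≤ ε →
        ((∀ r, innerRadius L0 y < r →
            r ≤ innerRadius L0 y *
              (1 + B0 * innerRadius L0 y ^ (2 / (k + ℓ + 3 / 2 + 1))) →
            0 < rho k ℓ L0 y r) ∧
          ∃ r1 : ℝ,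
            innerRadius L0 y *
              (1 + B0 * innerRadius L0 y ^ (2 / (k + ℓ + 3 / 2 + 1))) < r1 ∧
            r1 ≤ innerRadius L0 y *
                (1 + B2 * innerRadius L0 y ^ (1 / (k + ℓ + 3 / 2 + 1))) /
                (1 - B1 * innerRadius L0 y ^ (2 / (k + ℓ + 3 / 2 + 1))) ∧
            charFn L0 y r1 ≤ 0 ∧ rho k ℓ L0 y r1 = 0 ∧ pres k ℓ L0 y r1 = 0) := by
  obtain ⟨B₀, B₁, ε, hB₀, hB₁, hε, h⟩ := shell_support_general k ℓ L0 hk hl hL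
  refine ⟨B₀, 1 / 2, B₁, min ε 1, hB₀, one_half_pos, hB₀.trans hB₁, by positivity,
    fun y hy _ hR hRε ↦ ?_⟩
  obtain ⟨hrho, r₁, hlt, hle, hr₁⟩ := h y hy (hRε.trans (min_le_left _ _))
  exact ⟨hrho, r₁, hlt, hle.trans (mul_one_add_le_div (hB₀.trans hB₁).le hR
    (hRε.trans (min_le_right _ _)) (by linarith)), hr₁⟩
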